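/- Let λ and μ be partitions with μ⊆λ, with conjugates λ'=(λ'_1,…,λ'_s) and μ'=(μ'_1,…,μ'_s) (zero parts allowed), and let γ=(γ_{ij})∈T^diag(λ/μ,ℕ) with common diagonal values c_k. Then, as an identity of formal power series in ℤ[[t_1,t_2,…]], the Schur type quasi-symmetric function satisfies S_{λ/μ}(γ) = det[ M_{(c_{−μ'_j+j−1}, c_{−μ'_j+j−2}, …, c_{−μ'_j+j−(λ'_i−μ'_j−i+j)})} ]_{1≤i,j≤s}, where the (i,j) entry is understood to be 1 if λ'_i−μ'_j−i+j=0 and 0 if λ'_i−μ'_j−i+j<0. -/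

import Mathlib

/-!
The identity is first proved with finitely many variables `t_1, …, t_N`, by induction on `N`, over
any commutative ring and with an arbitrary weight `w m k` for an entry `m` in a box of content `k`.

Describe the `j`-th column of a skew shape by its top content `a j = j - μ'_j` and its bottom
content `b j = j - λ'_j + 1`; both are strictly increasing in `j`. The `(i, j)` entry of the matrix
is the generating function `colSum` of strict columns with contents `a j, a j - 1, …, b i`.
Splitting it according to whether the last entry equals `N + 1` gives
`colSum (N+1) a b = colSum N a b + w (N+1) b * colSum N a (b+1)`. Expanding all rows of the
determinant with this recursion yields a sum over sets `S` of columns in which `b` is raised by one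
(`det_colSum_succ`). Terms in which two of the raised bounds agree vanish, and the remaining ones
are the ways of removing a horizontal strip. Tableaux satisfy the same recursion: the boxes
containing `N + 1` form a horizontal strip (`isTab_extTab`, `exists_extTab`, `mem_tabs`). Together
this is `det_colSum`.

The passage to power series compares the coefficient of a fixed monomial with the finite-variable
version (`coeff_det_colSum`, `coeff_det_Mqsym`). Monomial quasi-symmetric functions are the case of
a single column (`card_column`). Since `c` may vanish at contents not occurring in `λ/μ`, some matrix
entries do not count anything meaningful (an infinite set has `Nat.card` equal to `0`); permutations
using such an entry always contain a zero factor as well.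
-/

open scoped BigOperators

noncomputable section

namespace SMZ

/-- Box `(i,j)` (0-indexed) lies in the Young diagram of the partition `lam`. -/
def InDiag (lam : ℕ → ℕ) (p : ℕ × ℕ) : Prop := p.2 < lam p.1

/-- `(i,j)` is a corner of the Young diagram of `lam`. -/
def IsCorner (lam : ℕ → ℕ) (p : ℕ × ℕ) : Prop :=
  InDiag lam p ∧ ¬ InDiag lam (p.1 + 1, p.2) ∧ ¬ InDiag lam (p.1, p.2 + 1)

/-- `lam` is the part function of a partition with exactly `r` positive parts. -/
def IsPartitionWith (r : ℕ) (lam : ℕ → ℕ) : Prop :=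
  Antitone lam ∧ ∀ i, 0 < lam i ↔ i < r

/-- Semi-standard Young tableau of shape `lam`, normalized to be `0` off the diagram. -/
structure IsSSYT (lam : ℕ → ℕ) (m : ℕ × ℕ → ℕ) : Prop where
  zero_off : ∀ p, ¬ InDiag lam p → m p = 0
  pos : ∀ p, InDiag lam p → 0 < m p
  row_le : ∀ i j, InDiag lam (i, j + 1) → m (i, j) ≤ m (i, j + 1)
  col_lt : ∀ i j, InDiag lam (i + 1, j) → m (i, j) < m (i + 1, j)

/-- The summand `1 / M^s` of the Schur multiple zeta series. -/
def term (r : ℕ) (lam : ℕ → ℕ) (s : ℕ × ℕ → ℂ) (m : ℕ × ℕ → ℕ) : ℂ :=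
  ∏ i ∈ Finset.range r, ∏ j ∈ Finset.range (lam i), (m (i, j) : ℂ) ^ (-(s (i, j)))

/-- The Schur multiple zeta function `ζ_λ(s)`. -/
def schurZeta (r : ℕ) (lam : ℕ → ℕ) (s : ℕ × ℕ → ℂ) : ℂ :=
  ∑' M : {m : ℕ × ℕ → ℕ // IsSSYT lam m}, term r lam s M.1

/-- The region `W_λ` of (sufficient) absolute convergence. -/
def MemW (lam : ℕ → ℕ) (s : ℕ × ℕ → ℂ) : Prop :=
  (∀ p, InDiag lam p → 1 ≤ (s p).re) ∧ ∀ p, IsCorner lam p → 1 < (s p).re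

/-- Euler–Zagier multiple zeta function. -/
def mzv {n : ℕ} (s : Fin n → ℂ) : ℂ :=
  ∑' f : {f : Fin n → ℕ // StrictMono f ∧ ∀ i, 0 < f i},
    ∏ i, (f.1 i : ℂ) ^ (-(s i))

/-- Euler–Zagier multiple zeta-star function. -/
def mzvStar {n : ℕ} (s : Fin n → ℂ) : ℂ :=
  ∑' f : {f : Fin n → ℕ // Monotone f ∧ ∀ i, 0 < f i},
    ∏ i, (f.1 i : ℂ) ^ (-(s i))

/-- `ζ⋆(a start, a (start+1), …)` with `len` terms; `1` if `len = 0`, `0` if `len < 0`. -/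
def mzvStarSeq (a : ℤ → ℂ) (start len : ℤ) : ℂ :=
  if len < 0 then 0 else mzvStar fun i : Fin len.toNat => a (start + (i : ℕ))

/-- `ζ(a start, a (start-1), …)` with `len` terms; `1` if `len = 0`, `0` if `len < 0`. -/
def mzvSeqDesc (a : ℤ → ℂ) (start len : ℤ) : ℂ :=
  if len < 0 then 0 else mzv fun i : Fin len.toNat => a (start - (i : ℕ))

/-- The conjugate partition: `conjPart r lam c` is the number of rows `i < r` with a box
in column `c`, i.e. the (0-indexed) `c`-th part of `λ'`. -/
def conjPart (r : ℕ) (lam : ℕ → ℕ) (c : ℕ) : ℕ :=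
  ((Finset.range r).filter fun i => c < lam i).card

end SMZ
namespace SMZ

/-- Box `(i,j)` (0-indexed) lies in the skew Young diagram `λ/μ`. -/
def InSkew (lam mu : ℕ → ℕ) (p : ℕ × ℕ) : Prop := mu p.1 ≤ p.2 ∧ p.2 < lam p.1

/-- `(i,j)` is a corner of the skew diagram `λ/μ`. -/
def IsSkewCorner (lam mu : ℕ → ℕ) (p : ℕ × ℕ) : Prop :=
  InSkew lam mu p ∧ ¬ InSkew lam mu (p.1 + 1, p.2) ∧ ¬ InSkew lam mu (p.1, p.2 + 1)

/-- `(lam, mu)` is a skew pair with at most `r` rows (zero parts allowed). -/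
def IsSkewPairWith (r : ℕ) (lam mu : ℕ → ℕ) : Prop :=
  Antitone lam ∧ Antitone mu ∧ (∀ i, mu i ≤ lam i) ∧ ∀ i, r ≤ i → lam i = 0

/-- Semi-standard Young tableau of skew shape `λ/μ`, normalized to be `0` off the diagram. -/
structure IsSkewSSYT (lam mu : ℕ → ℕ) (m : ℕ × ℕ → ℕ) : Prop where
  zero_off : ∀ p, ¬ InSkew lam mu p → m p = 0
  pos : ∀ p, InSkew lam mu p → 0 < m p
  row_le : ∀ i j, InSkew lam mu (i, j) → InSkew lam mu (i, j + 1) → m (i, j) ≤ m (i, j + 1)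
  col_lt : ∀ i j, InSkew lam mu (i, j) → InSkew lam mu (i + 1, j) → m (i, j) < m (i + 1, j)

/-- The summand `1 / M^s` of the skew Schur multiple zeta series. -/
def skewTerm (r : ℕ) (lam mu : ℕ → ℕ) (s : ℕ × ℕ → ℂ) (m : ℕ × ℕ → ℕ) : ℂ :=
  ∏ i ∈ Finset.range r, ∏ j ∈ Finset.Ico (mu i) (lam i), (m (i, j) : ℂ) ^ (-(s (i, j)))

/-- The skew Schur multiple zeta function `ζ_{λ/μ}(s)`. -/
def skewSchurZeta (r : ℕ) (lam mu : ℕ → ℕ) (s : ℕ × ℕ → ℂ) : ℂ :=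
  ∑' M : {m : ℕ × ℕ → ℕ // IsSkewSSYT lam mu m}, skewTerm r lam mu s M.1

/-- The region `W_{λ/μ}` of (sufficient) absolute convergence. -/
def MemWSkew (lam mu : ℕ → ℕ) (s : ℕ × ℕ → ℂ) : Prop :=
  (∀ p, InSkew lam mu p → 1 ≤ (s p).re) ∧ ∀ p, IsSkewCorner lam mu p → 1 < (s p).re

end SMZ
namespace SMZ

/-- The essential quasi-symmetric function `E_γ` as a multivariate power series in the
variables `t_1, t_2, …` (indexed by `ℕ`, variable `0` unused): the coefficient of a
monomial `d` is the number of ways to write it as `t_{m_1}^{γ_1} ⋯ t_{m_n}^{γ_n}` with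
`0 < m_1 ≤ … ≤ m_n`. -/
def Eqsym {n : ℕ} (γ : Fin n → ℕ) : MvPowerSeries ℕ ℤ := fun d =>
  (Nat.card {f : Fin n → ℕ // Monotone f ∧ (∀ i, 0 < f i) ∧
    (∑ i, Finsupp.single (f i) (γ i)) = d} : ℤ)

/-- The monomial quasi-symmetric function `M_γ` as a multivariate power series. -/
def Mqsym {n : ℕ} (γ : Fin n → ℕ) : MvPowerSeries ℕ ℤ := fun d =>
  (Nat.card {f : Fin n → ℕ // StrictMono f ∧ (∀ i, 0 < f i) ∧
    (∑ i, Finsupp.single (f i) (γ i)) = d} : ℤ)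

/-- `E_{(c start, c (start+1), …)}` with `len` terms; `1` if `len = 0`, `0` if `len < 0`. -/
def EqsymSeq (c : ℤ → ℕ) (start len : ℤ) : MvPowerSeries ℕ ℤ :=
  if len < 0 then 0 else Eqsym fun i : Fin len.toNat => c (start + (i : ℕ))

/-- `M_{(c start, c (start-1), …)}` with `len` terms; `1` if `len = 0`, `0` if `len < 0`. -/
def MqsymSeqDesc (c : ℤ → ℕ) (start len : ℤ) : MvPowerSeries ℕ ℤ :=
  if len < 0 then 0 else Mqsym fun i : Fin len.toNat => c (start - (i : ℕ))

/-- The Schur type quasi-symmetric function `S_{λ/μ}(γ)` as a multivariate power series: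
the coefficient of a monomial `d` is the number of semi-standard Young tableaux `m` of
shape `λ/μ` with `∏_{(i,j)} t_{m_{ij}}^{γ_{ij}}` equal to the monomial `d`. -/
def schurQS (r : ℕ) (lam mu : ℕ → ℕ) (γ : ℕ × ℕ → ℕ) : MvPowerSeries ℕ ℤ := fun d =>
  (Nat.card {m : ℕ × ℕ → ℕ // IsSkewSSYT lam mu m ∧
    (∑ i ∈ Finset.range r, ∑ j ∈ Finset.Ico (mu i) (lam i),
      Finsupp.single (m (i, j)) (γ (i, j))) = d} : ℤ)

end SMZ
namespace SMZ

/-! ### Determinants with transfer-matrix entries -/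

/-- The sum over `m_a < m_{a-1} < ⋯ < m_b` in `{1, …, N}` of `∏ w (m_k) k`, the index `k` running
down from `a` to `b`. It is `1` for `b = a + 1` and `0` for `b > a + 1`. The recursion separates
the summands in which `m_b = N + 1`. -/
def colSum {R : Type*} [CommRing R] (w : ℕ → ℤ → R) : ℕ → ℤ → ℤ → R
  | 0, a, b => if b = a + 1 then 1 else 0
  | N + 1, a, b => colSum w N a b + w (N + 1) b * colSum w N a (b + 1)

/-- Raise by one the lower content bounds of the columns in `S`, i.e. remove the bottom box of each
of these columns. -/
def bump {n : ℕ} (S : Finset (Fin n)) (b : Fin n → ℤ) : Fin n → ℤ :=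
  fun j => if j ∈ S then b j + 1 else b j

lemma colSum_eq_zero {R : Type*} [CommRing R] (w : ℕ → ℤ → R) (N : ℕ) (a b : ℤ) (h : a + 1 < b) :
    colSum w N a b = 0 := by
  induction N generalizing b with
  | zero => simp [colSum, h.ne']
  | succ N ih => simp [colSum, ih b h, ih (b + 1) (by omega)]

/-- With no variables left, the determinant detects the empty shape: a permutation with a nonzero
contribution is strictly increasing, hence the identity. -/
lemma det_colSum_zero {R : Type*} [CommRing R] (w : ℕ → ℤ → R) {n : ℕ} (a b : Fin n → ℤ)
    (ha : StrictMono a) (hb : StrictMono b) :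
    (Matrix.of fun i j : Fin n => colSum w 0 (a j) (b i)).det
      = if ∀ j, b j = a j + 1 then 1 else 0 := by
  split_ifs with h
  · have : (Matrix.of fun i j : Fin n => colSum w 0 (a j) (b i)) = 1 := by
      ext i j
      simp [colSum, h, Matrix.one_apply, ha.injective.eq_iff]
    rw [this, Matrix.det_one]
  · rw [Matrix.det_apply]
    refine Finset.sum_eq_zero fun σ _ => ?_
    by_cases hσ : ∀ j, b (σ j) = a j + 1
    · exfalso
      have hm : StrictMono σ := fun x y hxy => by
        rw [← hb.lt_iff_lt, hσ, hσ]
        have := ha hxy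
        omega
      have hid : ∀ j, σ j = j := by
        have h1 : (hm.orderIsoOfSurjective σ σ.surjective) = OrderIso.refl (Fin n) :=
          Subsingleton.elim _ _
        intro j
        exact congrArg (fun f : Fin n ≃o Fin n => f j) h1
      exact h fun j => by rw [← hσ j, hid]
    · push Not at hσ
      obtain ⟨j, hj⟩ := hσ
      rw [Finset.prod_eq_zero (Finset.mem_univ j), smul_zero]
      simp [colSum, hj]

lemma bump_monotone {n : ℕ} {b : Fin n → ℤ} (hb : StrictMono b) (S : Finset (Fin n)) :
    Monotone (bump S b) := by
  intro x y hxy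
  rcases hxy.eq_or_lt with rfl | h
  · exact le_rfl
  · have := hb h
    unfold bump
    split_ifs <;> omega

/-- Expanding every row by the recursion of `colSum`; the terms whose row bounds collide vanish. -/
lemma det_colSum_succ {R : Type*} [CommRing R] (w : ℕ → ℤ → R) {n : ℕ} (a b : Fin n → ℤ)
    (hb : StrictMono b) (N : ℕ) :
    (Matrix.of fun i j : Fin n => colSum w (N + 1) (a j) (b i)).det
      = ∑ S : Finset (Fin n) with StrictMono (bump S b), (∏ i ∈ S, w (N + 1) (b i)) *
          (Matrix.of fun i j : Fin n => colSum w N (a j) (bump S b i)).det := by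
  have h1 : (Matrix.of fun i j : Fin n => colSum w (N + 1) (a j) (b i))
      = (fun i => w (N + 1) (b i) • fun j => colSum w N (a j) (b i + 1))
        + (fun i j => colSum w N (a j) (b i)) := by
    ext i j
    simp [colSum, add_comm]
  have h2 := (Matrix.detRowAlternating (n := Fin n) (R := R)).toMultilinearMap.map_add_univ
    (fun i => w (N + 1) (b i) • fun j => colSum w N (a j) (b i + 1))
    (fun i j => colSum w N (a j) (b i))
  rw [h1]
  refine h2.trans ?_
  rw [Finset.sum_filter]
  refine Finset.sum_congr rfl fun S _ => ?_
  have h3 : S.piecewise (fun i => w (N + 1) (b i) • fun j => colSum w N (a j) (b i + 1))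
      (fun i j => colSum w N (a j) (b i))
      = S.piecewise (fun i => w (N + 1) (b i) • (fun j => colSum w N (a j) (bump S b i)))
        (fun i j => colSum w N (a j) (bump S b i)) := by
    ext i j
    by_cases hi : i ∈ S <;> simp [hi, bump]
  rw [h3, MultilinearMap.map_piecewise_smul, smul_eq_mul]
  split_ifs with hS
  · rfl
  · have hni : ¬ Function.Injective (bump S b) :=
      fun hi => hS ((bump_monotone hb S).strictMono_of_injective hi)
    simp only [Function.Injective, not_forall] at hni
    obtain ⟨x, y, hxy, hne⟩ := hni
    have : (Matrix.of fun i j : Fin n => colSum w N (a j) (bump S b i)).det = 0 :=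
      Matrix.det_zero_of_row_eq hne (by ext j; simp [hxy])
    exact mul_eq_zero_of_right _ this

/-! ### Tableaux in content coordinates -/

/-- A semi-standard filling of the shape whose `j`-th column occupies the contents
`b j ≤ k ≤ a j`; contents decrease downwards, the column is empty for `b j = a j + 1`, and the
right neighbour of content `k` in column `j` has content `k + 1` in column `j + 1`. Entries off the
shape are `0`. -/
structure IsTab {n : ℕ} (a b : Fin n → ℤ) (T : Fin n → ℤ → ℕ) : Prop where
  le : ∀ j, b j ≤ a j + 1
  zero_off : ∀ j k, ¬ (b j ≤ k ∧ k ≤ a j) → T j k = 0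
  pos : ∀ j k, b j ≤ k → k ≤ a j → 0 < T j k
  col : ∀ j k, b j ≤ k → k + 1 ≤ a j → T j (k + 1) < T j k
  row : ∀ j l : Fin n, (l : ℕ) = j + 1 → ∀ k, b j ≤ k → k ≤ a j → b l ≤ k + 1 → k + 1 ≤ a l →
    T j k ≤ T l (k + 1)

/-- Put the entry `m` into the boxes of content `b j` of the columns `j ∈ S`. -/
def extTab {n : ℕ} (b : Fin n → ℤ) (m : ℕ) (S : Finset (Fin n)) (T : Fin n → ℤ → ℕ) :
    Fin n → ℤ → ℕ :=
  fun j k => if j ∈ S ∧ k = b j then m else T j k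

open Classical in
/-- The finite set of tableaux with entries at most `N`, built by stripping off the boxes that
contain the largest entry. -/
def tabs {n : ℕ} (a : Fin n → ℤ) : ℕ → (Fin n → ℤ) → Finset (Fin n → ℤ → ℕ)
  | 0, b => if ∀ j, b j = a j + 1 then {0} else ∅
  | N + 1, b => ({S : Finset (Fin n) | StrictMono (bump S b)} : Finset _).biUnion
      fun S => (tabs a N (bump S b)).image (extTab b (N + 1) S)

lemma isTab_extTab {n : ℕ} {a b : Fin n → ℤ} {N : ℕ} {S : Finset (Fin n)} {T : Fin n → ℤ → ℕ}
    (hS : StrictMono (bump S b)) (hT : IsTab a (bump S b) T) (hN : ∀ j k, T j k ≤ N) :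
    IsTab a b (extTab b (N + 1) S T) ∧ ∀ j k, extTab b (N + 1) S T j k ≤ N + 1 := by
  have hle : ∀ j, j ∈ S → b j ≤ a j := fun j hj => by
    have := hT.le j
    simp only [bump, hj, if_true] at this
    omega
  have hge : ∀ j k, b j ≤ k → ¬ (j ∈ S ∧ k = b j) → bump S b j ≤ k := fun j k h1 h2 => by
    unfold bump
    split_ifs with hj
    · have : k ≠ b j := fun h => h2 ⟨hj, h⟩
      omega
    · exact h1
  have hbb : ∀ j, b j ≤ bump S b j := fun j => by unfold bump; split_ifs <;> omega
  refine ⟨⟨fun j => (hbb j).trans (hT.le j), ?_, ?_, ?_, ?_⟩, ?_⟩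
  · intro j k h
    unfold extTab
    rw [if_neg]
    · exact hT.zero_off j k fun h' => h ⟨(hbb j).trans h'.1, h'.2⟩
    · rintro ⟨h1, rfl⟩
      exact h ⟨le_rfl, hle j h1⟩
  · intro j k h1 h2
    unfold extTab
    split_ifs with h
    · omega
    · exact hT.pos j k (hge j k h1 h) h2
  · intro j k h1 h2
    unfold extTab
    rw [if_neg (fun h => by omega : ¬ (j ∈ S ∧ k + 1 = b j))]
    split_ifs with h
    · exact Nat.lt_succ_of_le (hN _ _)
    · exact hT.col j k (hge j k h1 h) h2
  · intro j j' hjj k h1 h2 h3 h4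
    unfold extTab
    by_cases h : j' ∈ S ∧ k + 1 = b j'
    · rw [if_pos h]
      split_ifs
      · exact le_rfl
      · exact (hN _ _).trans (Nat.le_succ _)
    · have h5 := hge j' (k + 1) h3 h
      have h6 : bump S b j < bump S b j' := hS (Fin.lt_def.2 (by omega))
      have h7 : ¬ (j ∈ S ∧ k = b j) := by
        rintro ⟨hj, rfl⟩
        simp only [bump, hj, if_true] at h5 h6
        omega
      rw [if_neg h, if_neg h7]
      exact hT.row j j' hjj k (hge j k h1 h7) h2 h5 h4
  · intro j k
    unfold extTab
    split_ifs
    · exact le_rfl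
    · exact (hN _ _).trans (Nat.le_succ _)

lemma exists_extTab {n : ℕ} {a b : Fin n → ℤ} (ha : StrictMono a) (hb : StrictMono b) {N : ℕ}
    {T : Fin n → ℤ → ℕ} (hT : IsTab a b T) (hN : ∀ j k, T j k ≤ N + 1) :
    ∃ S T', StrictMono (bump S b) ∧ IsTab a (bump S b) T' ∧ (∀ j k, T' j k ≤ N) ∧
      extTab b (N + 1) S T' = T := by
  classical
  let S : Finset (Fin n) := {j | T j (b j) = N + 1}
  have hmS : ∀ j, j ∈ S ↔ T j (b j) = N + 1 := fun j => by simp [S]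
  have hbb : ∀ j, b j ≤ bump S b j := fun j => by unfold bump; split_ifs <;> omega
  have hin : ∀ j k, T j k ≠ 0 → b j ≤ k ∧ k ≤ a j := fun j k h => by
    by_contra hoff
    exact h (hT.zero_off j k hoff)
  -- the largest entry can only occur at the bottom of its column
  have hbot : ∀ j k, T j k = N + 1 → k = b j ∧ j ∈ S := fun j k h => by
    have h1 := hin j k (by omega)
    have h2 : k = b j := by
      by_contra hne
      have h3 := hT.col j (k - 1) (by omega) (by omega)
      have h4 := hN j (k - 1)
      rw [sub_add_cancel] at h3
      omega
    exact ⟨h2, (hmS j).2 (h2 ▸ h)⟩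
  have hlt : ∀ j k, bump S b j ≤ k → T j k ≠ N + 1 := fun j k h h' => by
    obtain ⟨h1, h2⟩ := hbot j k h'
    simp only [bump, h2, if_true] at h
    omega
  refine ⟨S, fun j k => if T j k = N + 1 then 0 else T j k, ?_, ⟨?_, ?_, ?_, ?_, ?_⟩, ?_, ?_⟩
  · refine (bump_monotone hb S).strictMono_of_injective ?_
    have key : ∀ x y : Fin n, x < y → bump S b x ≠ bump S b y := by
      intro x y hxy he
      have h1 := hb hxy
      by_cases hx : x ∈ S
      · by_cases hy : y ∈ S
        · simp only [bump, hx, hy, if_true] at he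
          omega
        · simp only [bump, hx, hy, if_true, if_false] at he
          -- the two columns have adjacent bounds, so they are adjacent columns
          have h2 : (y : ℕ) = x + 1 := by
            by_contra hne
            have hxy' := Fin.lt_def.1 hxy
            have hy' := y.2
            have h3 : b x < b ⟨x + 1, by omega⟩ := hb (Fin.lt_def.2 (by simp))
            have h4 : b ⟨x + 1, by omega⟩ < b y := hb (Fin.lt_def.2 (by simp; omega))
            omega
          have h5 := hin x (b x) (by rw [(hmS x).1 hx]; omega)
          have h6 := ha hxy
          have h7 := hT.row x y h2 (b x) le_rfl h5.2 (by omega) (by omega)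
          rw [he, (hmS x).1 hx] at h7
          exact hy ((hmS y).2 (le_antisymm (hN _ _) h7))
      · simp only [bump, hx, if_false] at he
        split_ifs at he <;> omega
    intro x y he
    rcases lt_trichotomy x y with h | h | h
    · exact (key x y h he).elim
    · exact h
    · exact (key y x h he.symm).elim
  · intro j
    have h1 := hT.le j
    unfold bump
    split_ifs with h
    · have := hin j (b j) (by rw [(hmS j).1 h]; omega)
      omega
    · exact h1
  · intro j k h
    split_ifs with h1
    · rfl
    · by_contra h2
      have h3 := hin j k h2
      refine h ⟨?_, h3.2⟩
      unfold bump
      split_ifs with h4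
      · have : k ≠ b j := by
          rintro rfl
          exact h1 ((hmS j).1 h4)
        omega
      · exact h3.1
  · intro j k h1 h2
    rw [if_neg (hlt j k h1)]
    exact hT.pos j k ((hbb j).trans h1) h2
  · intro j k h1 h2
    rw [if_neg (hlt j k h1), if_neg (hlt j (k + 1) (by omega))]
    exact hT.col j k ((hbb j).trans h1) h2
  · intro j j' hjj k h1 h2 h3 h4
    rw [if_neg (hlt j k h1), if_neg (hlt j' (k + 1) h3)]
    exact hT.row j j' hjj k ((hbb j).trans h1) h2 ((hbb j').trans h3) h4
  · intro j k
    have := hN j k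
    show (if T j k = N + 1 then 0 else T j k) ≤ N
    split_ifs <;> omega
  · ext j k
    unfold extTab
    by_cases h1 : j ∈ S ∧ k = b j
    · rw [if_pos h1, h1.2, (hmS j).1 h1.1]
    · rw [if_neg h1]
      exact if_neg fun h2 => h1 (hbot j k h2).symm

lemma mem_tabs {n : ℕ} {a : Fin n → ℤ} (ha : StrictMono a) (N : ℕ) (b : Fin n → ℤ)
    (hb : StrictMono b) (T : Fin n → ℤ → ℕ) :
    T ∈ tabs a N b ↔ IsTab a b T ∧ ∀ j k, T j k ≤ N := by
  induction N generalizing b T with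
  | zero =>
    simp only [tabs]
    constructor
    · intro h
      split_ifs at h with h1
      · rw [Finset.mem_singleton] at h
        subst h
        refine ⟨⟨fun j => (h1 j).le, fun _ _ _ => rfl, ?_, ?_, fun _ _ _ _ _ _ _ _ => le_rfl⟩,
          fun _ _ => le_rfl⟩
        · intro j k h2 h3
          have := h1 j
          omega
        · intro j k h2 h3
          have := h1 j
          omega
      · simp at h
    · rintro ⟨h1, h2⟩
      have h3 : ∀ j, b j = a j + 1 := fun j => by
        by_contra hne
        have h4 := h1.le j
        have h5 := h1.pos j (b j) le_rfl (by omega)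
        have h6 := h2 j (b j)
        omega
      rw [if_pos h3, Finset.mem_singleton]
      ext j k
      exact Nat.le_zero.1 (h2 j k)
  | succ N ih =>
    simp only [tabs, Finset.mem_biUnion, Finset.mem_filter, Finset.mem_univ, true_and,
      Finset.mem_image]
    constructor
    · rintro ⟨S, hS, T', hT', rfl⟩
      rw [ih _ hS] at hT'
      exact isTab_extTab hS hT'.1 hT'.2
    · rintro ⟨h1, h2⟩
      obtain ⟨S, T', hS, h3, h4, h5⟩ := exists_extTab ha hb h1 h2
      exact ⟨S, hS, T', (ih _ hS _).2 ⟨h3, h4⟩, h5⟩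

/-- The Jacobi–Trudi identity in finitely many variables, with arbitrary weights `w m k` for an
entry `m` in a box of content `k`. -/
lemma det_colSum {R : Type*} [CommRing R] (w : ℕ → ℤ → R) {n : ℕ} {a : Fin n → ℤ}
    (ha : StrictMono a) (N : ℕ) (b : Fin n → ℤ) (hb : StrictMono b) :
    (Matrix.of fun i j : Fin n => colSum w N (a j) (b i)).det
      = ∑ T ∈ tabs a N b, ∏ j, ∏ k ∈ Finset.Icc (b j) (a j), w (T j k) k := by
  classical
  induction N generalizing b with
  | zero =>
    rw [det_colSum_zero w a b ha hb]
    simp only [tabs]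
    split_ifs with h
    · simp [h]
    · simp
  | succ N ih =>
    rw [det_colSum_succ w a b hb N]
    simp only [tabs]
    -- both the strip `S` and the smaller tableau are recovered from the extended tableau
    have hext : ∀ S, StrictMono (bump S b) → ∀ T ∈ tabs a N (bump S b),
        (∀ j, extTab b (N + 1) S T j (b j) = N + 1 ↔ j ∈ S) ∧
        (fun j k => if extTab b (N + 1) S T j k = N + 1 then 0 else extTab b (N + 1) S T j k)
          = T := by
      intro S hS T hT
      obtain ⟨h1, h2⟩ := (mem_tabs ha N _ hS T).1 hT
      constructor
      · intro j
        have := h2 j (b j)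
        unfold extTab
        by_cases hj : j ∈ S
        · simp [hj]
        · simp only [hj, false_and, if_false, iff_false]
          omega
      · ext j k
        have := h2 j k
        unfold extTab
        by_cases hj : j ∈ S ∧ k = b j
        · simp only [hj, and_self, if_true]
          rw [hj.2.symm]
          refine (h1.zero_off j k ?_).symm
          simp only [bump, hj.1, if_true]
          omega
        · simp only [hj, if_false]
          rw [if_neg (by omega)]
    rw [Finset.sum_biUnion]
    · refine Finset.sum_congr rfl fun S hS => ?_
      replace hS : StrictMono (bump S b) := by simpa using hS
      rw [Finset.sum_image]
      · rw [ih _ hS, Finset.mul_sum]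
        refine Finset.sum_congr rfl fun T hT => ?_
        have hTab := ((mem_tabs ha N _ hS T).1 hT).1
        have hp : (∏ i ∈ S, w (N + 1) (b i)) = ∏ i, if i ∈ S then w (N + 1) (b i) else 1 := by
          simp
        rw [hp, ← Finset.prod_mul_distrib]
        refine Finset.prod_congr rfl fun j _ => ?_
        by_cases hj : j ∈ S
        · have h1 := hTab.le j
          simp only [bump, hj, if_true] at h1 ⊢
          rw [← Finset.insert_Icc_add_one_left_eq_Icc (by omega : b j ≤ a j),
            Finset.prod_insert (by simp)]
          congr 1
          · simp [extTab, hj]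
          · refine Finset.prod_congr rfl fun k hk => ?_
            rw [Finset.mem_Icc] at hk
            rw [extTab, if_neg (by omega)]
        · simp [bump, extTab, hj]
      · intro T hT T' hT' h
        rw [← (hext S hS T hT).2, ← (hext S hS T' hT').2, h]
    · intro S hS S' hS' hne
      replace hS : StrictMono (bump S b) := by simpa using hS
      replace hS' : StrictMono (bump S' b) := by simpa using hS'
      rw [Function.onFun, Finset.disjoint_left]
      intro T h1 h2
      rw [Finset.mem_image] at h1 h2
      obtain ⟨T1, hT1, rfl⟩ := h1
      obtain ⟨T2, hT2, he⟩ := h2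
      refine hne (Finset.ext fun j => ?_)
      rw [← (hext S hS T1 hT1).1 j, ← (hext S' hS' T2 hT2).1 j, he]

/-! ### Coefficient extraction -/

/-- The exponent of the monomial of a tableau when content `k` carries the exponent `c k`. -/
def tabWt {n : ℕ} (c : ℤ → ℕ) (a b : Fin n → ℤ) (T : Fin n → ℤ → ℕ) : ℕ →₀ ℕ :=
  ∑ j, ∑ k ∈ Finset.Icc (b j) (a j), Finsupp.single (T j k) (c k)

/-- The weight `t_m ^ (c k)` of an entry `m` in a box of content `k`. -/
def monoWt (c : ℤ → ℕ) (m : ℕ) (k : ℤ) : MvPowerSeries ℕ ℤ :=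
  MvPowerSeries.monomial (Finsupp.single m (c k)) 1

lemma prod_monomial_one {ι : Type*} (s : Finset ι) (f : ι → ℕ →₀ ℕ) :
    ∏ i ∈ s, (MvPowerSeries.monomial (f i) 1 : MvPowerSeries ℕ ℤ)
      = MvPowerSeries.monomial (∑ i ∈ s, f i) 1 := by
  classical
  induction s using Finset.induction_on with
  | empty => simp
  | insert i s hi ih =>
    rw [Finset.prod_insert hi, Finset.sum_insert hi, ih, MvPowerSeries.monomial_mul_monomial,
      one_mul]

/-- If all exponents `c k` on the shape are positive, then the variables `t_m` with `m > N` do not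
influence the coefficient of a monomial in `t_1, …, t_N`. -/
lemma coeff_det_colSum {n : ℕ} (c : ℤ → ℕ) {a b : Fin n → ℤ} (ha : StrictMono a)
    (hb : StrictMono b) (hc : ∀ j k, b j ≤ k → k ≤ a j → 0 < c k) (N : ℕ) (d : ℕ →₀ ℕ)
    (hd : ∀ m ∈ d.support, m ≤ N) :
    MvPowerSeries.coeff d
        (Matrix.of fun i j : Fin n => colSum (monoWt c) N (a j) (b i)).det
      = (Nat.card {T : Fin n → ℤ → ℕ // IsTab a b T ∧ tabWt c a b T = d} : ℤ) := by
  classical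
  rw [det_colSum _ ha N b hb, map_sum]
  have h1 : ∀ T, MvPowerSeries.coeff d
      (∏ j, ∏ k ∈ Finset.Icc (b j) (a j), monoWt c (T j k) k)
      = if tabWt c a b T = d then (1 : ℤ) else 0 := by
    intro T
    simp only [monoWt, prod_monomial_one, MvPowerSeries.coeff_monomial]
    simp only [tabWt, eq_comm]
  simp only [h1]
  rw [Finset.sum_boole, Nat.subtype_card]
  intro T
  rw [Finset.mem_filter, mem_tabs ha N b hb]
  constructor
  · rintro ⟨⟨h2, -⟩, h3⟩
    exact ⟨h2, h3⟩
  · rintro ⟨h2, h3⟩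
    refine ⟨⟨h2, fun j k => ?_⟩, h3⟩
    by_cases hk : b j ≤ k ∧ k ≤ a j
    · refine hd _ ?_
      have h4 : Finsupp.single (T j k) (c k) ≤ d := by
        rw [← h3]
        refine le_trans ?_ (Finset.single_le_sum_of_canonicallyOrdered (Finset.mem_univ j))
        exact Finset.single_le_sum_of_canonicallyOrdered
          (f := fun k => Finsupp.single (T j k) (c k)) (Finset.mem_Icc.2 hk)
      have h5 := h4 (T j k)
      rw [Finsupp.single_eq_same] at h5
      have := hc j k hk.1 hk.2
      rw [Finsupp.mem_support_iff]
      omega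
    · rw [h2.zero_off j k hk]
      exact Nat.zero_le _

/-- A monomial quasi-symmetric function counts the tableaux with a single column. -/
lemma card_column (c : ℤ → ℕ) (a b : ℤ) (L : ℕ) (hL : (L : ℤ) = a - b + 1) (d : ℕ →₀ ℕ) :
    Nat.card {f : Fin L → ℕ // StrictMono f ∧ (∀ i, 0 < f i) ∧
      (∑ i, Finsupp.single (f i) (c (a - (i : ℕ)))) = d}
    = Nat.card {T : Fin 1 → ℤ → ℕ // IsTab (fun _ => a) (fun _ => b) T ∧
        tabWt c (fun _ => a) (fun _ => b) T = d} := by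
  let F : (Fin L → ℕ) → Fin 1 → ℤ → ℕ := fun f _ k =>
    if h : b ≤ k ∧ k ≤ a then f ⟨(a - k).toNat, by omega⟩ else 0
  let G : (Fin 1 → ℤ → ℕ) → Fin L → ℕ := fun T i => T 0 (a - (i : ℕ))
  have hGF : ∀ f, G (F f) = f := by
    intro f
    ext i
    have hi := i.2
    simp only [G, F]
    rw [dif_pos (by omega)]
    congr 1
    ext
    simp
  have hFG : ∀ T, IsTab (fun _ => a) (fun _ => b) T → F (G T) = T := by
    intro T hT
    ext j k
    obtain rfl : j = 0 := Subsingleton.elim _ _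
    simp only [G, F]
    split_ifs with h
    · congr 1
      omega
    · exact (hT.zero_off 0 k h).symm
  have hwt : ∀ T, tabWt c (fun _ => a) (fun _ => b) T
      = ∑ i, Finsupp.single (G T i) (c (a - (i : ℕ))) := by
    intro T
    simp only [tabWt, Finset.univ_unique, Finset.sum_singleton]
    refine Finset.sum_bij' (fun k hk => ⟨(a - k).toNat, by rw [Finset.mem_Icc] at hk; omega⟩)
      (fun i _ => a - (i : ℕ)) ?_ ?_ ?_ ?_ ?_
    · intros
      exact Finset.mem_univ _
    · intro i _
      have := i.2
      rw [Finset.mem_Icc]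
      omega
    · intro k hk
      rw [Finset.mem_Icc] at hk
      simp only
      omega
    · intro i _
      ext
      simp
    · intro k hk
      rw [Finset.mem_Icc] at hk
      have : a - ((a - k).toNat : ℤ) = k := by omega
      simp only [G, this]
      rfl
  refine Nat.card_congr ⟨fun f => ⟨F f.1, ?_, ?_⟩, fun T => ⟨G T.1, ?_, ?_, ?_⟩, ?_, ?_⟩
  · obtain ⟨f, h1, h2, h3⟩ := f
    refine ⟨fun _ => by omega, ?_, ?_, ?_, ?_⟩
    · intro j k h
      exact dif_neg h
    · intro j k h h'
      simp only [F]
      rw [dif_pos ⟨h, h'⟩]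
      exact h2 _
    · intro j k h h'
      simp only [F]
      rw [dif_pos ⟨by omega, h'⟩, dif_pos ⟨h, by omega⟩]
      refine h1 (Fin.lt_def.2 ?_)
      simp only
      omega
    · intro j j' h
      omega
  · rw [hwt, hGF]
    exact f.2.2.2
  · obtain ⟨T, hT, h⟩ := T
    -- strict increase along the column follows from the comparison of neighbours
    have key : ∀ p q : ℕ, p < q → q < L → T 0 (a - (p : ℕ)) < T 0 (a - (q : ℕ)) := by
      intro p q hpq
      induction q, hpq using Nat.le_induction with
      | base =>
        intro hq
        have := hT.col 0 (a - ((p + 1 : ℕ) : ℤ)) (by omega) (by omega)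
        rwa [show a - ((p + 1 : ℕ) : ℤ) + 1 = a - (p : ℕ) by omega] at this
      | succ q hq ih =>
        intro hq'
        refine (ih (by omega)).trans ?_
        have := hT.col 0 (a - ((q + 1 : ℕ) : ℤ)) (by omega) (by omega)
        rwa [show a - ((q + 1 : ℕ) : ℤ) + 1 = a - (q : ℕ) by omega] at this
    intro x y hxy
    exact key x y hxy y.2
  · intro i
    have := i.2
    exact T.2.1.pos 0 _ (by omega) (by omega)
  · rw [← hwt]
    exact T.2.2
  · intro f
    exact Subtype.ext (hGF _)
  · intro T
    exact Subtype.ext (hFG _ T.2.1)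

lemma coeff_MqsymSeqDesc (c : ℤ → ℕ) (a b len : ℤ) (hlen : len = a - b + 1)
    (hc : ∀ k, b ≤ k → k ≤ a → 0 < c k) (N : ℕ) (d : ℕ →₀ ℕ) (hd : ∀ m ∈ d.support, m ≤ N) :
    MvPowerSeries.coeff d (MqsymSeqDesc c a len)
      = MvPowerSeries.coeff d (colSum (monoWt c) N a b) := by
  unfold MqsymSeqDesc
  split_ifs with h
  · rw [colSum_eq_zero _ _ _ _ (by omega)]
  · have h1 := coeff_det_colSum (n := 1) c (a := fun _ => a) (b := fun _ => b)
      (Subsingleton.strictMono _) (Subsingleton.strictMono _) (fun _ => hc) N d hd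
    rw [Matrix.det_fin_one, ← card_column c a b len.toNat (by omega)] at h1
    exact h1.symm

lemma coeff_prod_congr {ι : Type*} (s : Finset ι) (f g : ι → MvPowerSeries ℕ ℤ) (d : ℕ →₀ ℕ)
    (h : ∀ i ∈ s, ∀ e ≤ d, MvPowerSeries.coeff e (f i) = MvPowerSeries.coeff e (g i)) :
    ∀ e ≤ d, MvPowerSeries.coeff e (∏ i ∈ s, f i) = MvPowerSeries.coeff e (∏ i ∈ s, g i) := by
  classical
  induction s using Finset.induction_on with
  | empty => simp
  | insert i s hi ih =>
    intro e he
    rw [Finset.prod_insert hi, Finset.prod_insert hi, MvPowerSeries.coeff_mul,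
      MvPowerSeries.coeff_mul]
    refine Finset.sum_congr rfl fun p hp => ?_
    rw [Finset.HasAntidiagonal.mem_antidiagonal] at hp
    rw [h i (Finset.mem_insert_self _ _) p.1 (le_trans (hp ▸ le_self_add) he),
      ih (fun j hj => h j (Finset.mem_insert_of_mem hj)) p.2 (le_trans (hp ▸ le_add_self) he)]

/-- The determinant of monomial quasi-symmetric functions has the coefficients of its
finite-variable version, although `c` is only known to be positive on contents that occur in the
shape. A permutation using an entry that involves a missing content `k` also uses an entry with
`b (σ j) > a j + 1`, which vanishes: otherwise `σ` would map `{j | a j < k}` into itself. -/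
lemma coeff_det_Mqsym {n : ℕ} (c : ℤ → ℕ) (a b : Fin n → ℤ)
    (hc : ∀ j k, b j ≤ k → k ≤ a j → 0 < c k) (N : ℕ) (d : ℕ →₀ ℕ)
    (hd : ∀ m ∈ d.support, m ≤ N) :
    MvPowerSeries.coeff d
        (Matrix.of fun i j : Fin n => MqsymSeqDesc c (a j) (a j - b i + 1)).det
      = MvPowerSeries.coeff d
        (Matrix.of fun i j : Fin n => colSum (monoWt c) N (a j) (b i)).det := by
  classical
  rw [Matrix.det_apply, Matrix.det_apply, map_sum, map_sum]
  refine Finset.sum_congr rfl fun σ _ => ?_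
  rw [Units.smul_def, Units.smul_def, map_zsmul, map_zsmul]
  congr 1
  simp only [Matrix.of_apply]
  by_cases h : ∃ j, a j + 1 < b (σ j)
  · obtain ⟨j, hj⟩ := h
    rw [Finset.prod_eq_zero (Finset.mem_univ j), Finset.prod_eq_zero (Finset.mem_univ j)]
    · exact colSum_eq_zero _ _ _ _ hj
    · exact if_pos (by omega)
  · push Not at h
    refine coeff_prod_congr _ _ _ d ?_ d le_rfl
    intro i _ e he
    refine coeff_MqsymSeqDesc c _ _ _ rfl ?_ N e fun m hm => hd m (Finsupp.support_mono he hm)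
    intro k hk1 hk2
    by_contra hk
    have hmiss : ∀ l, b l ≤ k → a l < k := fun l h1 => by
      by_contra h2
      exact hk (hc l k h1 (by omega))
    let A : Finset (Fin n) := {l | a l < k}
    have hA : ∀ l, l ∈ A ↔ a l < k := fun l => by simp [A]
    have hmap : A.image σ ⊆ A := by
      intro x hx
      obtain ⟨l, hl, rfl⟩ := Finset.mem_image.1 hx
      rw [hA] at hl ⊢
      exact hmiss _ (by have := h l; omega)
    have heq : A.image σ = A := Finset.eq_of_subset_of_card_le hmap
      (Finset.card_image_of_injective _ σ.injective).ge
    have h1 : σ i ∈ A.image σ := by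
      rw [heq, hA]
      exact hmiss _ hk1
    obtain ⟨l, hl, hli⟩ := Finset.mem_image.1 h1
    rw [σ.injective hli, hA] at hl
    omega

/-! ### From row lengths to columns -/

lemma lt_conjPart {r : ℕ} {lam : ℕ → ℕ} (hl : Antitone lam) (hr : ∀ i, r ≤ i → lam i = 0)
    (i j : ℕ) : i < conjPart r lam j ↔ j < lam i := by
  unfold conjPart
  constructor
  · intro h
    by_contra h'
    have hsub : ((Finset.range r).filter fun i => j < lam i) ⊆ Finset.range i := by
      intro x hx
      rw [Finset.mem_filter] at hx
      rw [Finset.mem_range]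
      by_contra hx'
      have := hl (not_lt.1 hx')
      omega
    have := Finset.card_le_card hsub
    rw [Finset.card_range] at this
    omega
  · intro h
    have hsub : Finset.range (i + 1) ⊆ ((Finset.range r).filter fun i => j < lam i) := by
      intro x hx
      rw [Finset.mem_range] at hx
      have h1 := hl (Nat.lt_succ_iff.1 hx)
      rw [Finset.mem_filter, Finset.mem_range]
      refine ⟨?_, by omega⟩
      by_contra hx'
      have := hr x (not_lt.1 hx')
      omega
    have := Finset.card_le_card hsub
    rw [Finset.card_range] at this
    omega

lemma conjPart_antitone (r : ℕ) (lam : ℕ → ℕ) : Antitone (conjPart r lam) := by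
  intro x y hxy
  refine Finset.card_le_card fun i hi => ?_
  rw [Finset.mem_filter] at hi ⊢
  exact ⟨hi.1, by omega⟩

/-- Semi-standard tableaux of shape `λ/μ` are the tableaux in content coordinates whose `j`-th
column has top content `j - μ'_j` and bottom content `j - λ'_j + 1`. -/
lemma card_skew {r : ℕ} {lam mu : ℕ → ℕ} (hlm : IsSkewPairWith r lam mu)
    (γ : ℕ × ℕ → ℕ) (c : ℤ → ℕ)
    (hdiag : ∀ p : ℕ × ℕ, InSkew lam mu p → γ p = c ((p.2 : ℤ) - (p.1 : ℤ)))
    {a b : Fin (lam 0) → ℤ}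
    (ha : ∀ j, a j = ((j : ℕ) : ℤ) - (conjPart r mu j : ℤ))
    (hb : ∀ j, b j = ((j : ℕ) : ℤ) - (conjPart r lam j : ℤ) + 1) (d : ℕ →₀ ℕ) :
    Nat.card {m : ℕ × ℕ → ℕ // IsSkewSSYT lam mu m ∧
      (∑ i ∈ Finset.range r, ∑ j ∈ Finset.Ico (mu i) (lam i),
        Finsupp.single (m (i, j)) (γ (i, j))) = d}
    = Nat.card {T : Fin (lam 0) → ℤ → ℕ // IsTab a b T ∧ tabWt c a b T = d} := by
  obtain ⟨hl, hm, hle, hr⟩ := hlm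
  have hlc := lt_conjPart hl hr
  have hmc := lt_conjPart hm fun i hi => Nat.le_zero.1 (hr i hi ▸ hle i)
  have hcc : ∀ j, conjPart r mu j ≤ conjPart r lam j := fun j => by
    by_contra h
    have h1 := (hmc _ _).1 (not_le.1 h)
    have h2 := hle (conjPart r lam j)
    have := (hlc (conjPart r lam j) j).2 (by omega)
    omega
  have hl0 : ∀ i, lam i ≤ lam 0 := fun i => hl (Nat.zero_le i)
  -- the box `(i, j)` has content `j - i`
  have hbox : ∀ (i : ℕ) (j : Fin (lam 0)), InSkew lam mu (i, (j : ℕ)) ↔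
      b j ≤ ((j : ℕ) : ℤ) - i ∧ ((j : ℕ) : ℤ) - i ≤ a j := fun i j => by
    have h1 := hlc i j
    have h2 := hmc i j
    rw [hb, ha]
    unfold InSkew
    simp only
    omega
  have hrow : ∀ (j : Fin (lam 0)) (k : ℤ), k ≤ a j →
      ((j : ℕ) : ℤ) - ((((j : ℕ) : ℤ) - k).toNat : ℕ) = k := fun j k h => by
    rw [ha] at h
    omega
  let F : (ℕ × ℕ → ℕ) → Fin (lam 0) → ℤ → ℕ := fun m j k =>
    if b j ≤ k ∧ k ≤ a j then m ((((j : ℕ) : ℤ) - k).toNat, j) else 0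
  let G : (Fin (lam 0) → ℤ → ℕ) → ℕ × ℕ → ℕ := fun T p =>
    if h : p.2 < lam 0 then T ⟨p.2, h⟩ ((p.2 : ℤ) - p.1) else 0
  have hFbox : ∀ m (i : ℕ) (j : Fin (lam 0)), InSkew lam mu (i, (j : ℕ)) →
      F m j (((j : ℕ) : ℤ) - i) = m (i, j) := by
    intro m i j h
    simp only [F]
    rw [if_pos ((hbox i j).1 h)]
    congr 2
    omega
  have hGF : ∀ m, IsSkewSSYT lam mu m → G (F m) = m := by
    intro m h
    ext ⟨i, j⟩
    by_cases hp : InSkew lam mu (i, j)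
    · have hj : j < lam 0 := lt_of_lt_of_le hp.2 (hl0 i)
      simp only [G, hj, dif_pos]
      exact hFbox m i ⟨j, hj⟩ hp
    · rw [h.zero_off _ hp]
      simp only [G]
      split_ifs with hj
      · simp only [F]
        exact if_neg fun h' => hp ((hbox i ⟨j, hj⟩).2 h')
      · rfl
  have hFG : ∀ T, IsTab a b T → F (G T) = T := by
    intro T hT
    ext j k
    simp only [F]
    split_ifs with h
    · simp only [G, j.2, dif_pos]
      rw [hrow j k h.2]
    · exact (hT.zero_off j k h).symm
  have hwt : ∀ m, tabWt c a b (F m)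
      = ∑ i ∈ Finset.range r, ∑ j ∈ Finset.Ico (mu i) (lam i),
        Finsupp.single (m (i, j)) (γ (i, j)) := by
    intro m
    unfold tabWt
    rw [Finset.sum_sigma', Finset.sum_sigma']
    have hi0 : ∀ i j, j < lam i → i < r := fun i j h => by
      by_contra h'
      have := hr i (not_lt.1 h')
      omega
    refine Finset.sum_bij'
      (i := fun p _ => (⟨(((p.1 : ℕ) : ℤ) - p.2).toNat, (p.1 : ℕ)⟩ : Σ _ : ℕ, ℕ))
      (j := fun q hq => (⟨⟨q.2, ?_⟩, (q.2 : ℤ) - q.1⟩ : Σ _ : Fin (lam 0), ℤ)) ?_ ?_ ?_ ?_ ?_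
    · rw [Finset.mem_sigma, Finset.mem_Ico] at hq
      exact lt_of_lt_of_le hq.2.2 (hl0 _)
    · rintro ⟨j, k⟩ hp
      rw [Finset.mem_sigma, Finset.mem_Icc] at hp
      have h1 := (hbox (((j : ℕ) : ℤ) - k).toNat j).2 (by rw [hrow j k hp.2.2]; exact hp.2)
      rw [Finset.mem_sigma, Finset.mem_Ico, Finset.mem_range]
      exact ⟨hi0 _ _ h1.2, h1⟩
    · rintro ⟨i, j⟩ hq
      rw [Finset.mem_sigma, Finset.mem_Ico] at hq
      rw [Finset.mem_sigma, Finset.mem_Icc]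
      exact ⟨Finset.mem_univ _, (hbox i ⟨j, lt_of_lt_of_le hq.2.2 (hl0 _)⟩).1 hq.2⟩
    · rintro ⟨j, k⟩ hp
      rw [Finset.mem_sigma, Finset.mem_Icc] at hp
      simp only
      rw [hrow j k hp.2.2]
    · rintro ⟨i, j⟩ hq
      simp
    · rintro ⟨j, k⟩ hp
      rw [Finset.mem_sigma, Finset.mem_Icc] at hp
      have h1 := (hbox (((j : ℕ) : ℤ) - k).toNat j).2 (by rw [hrow j k hp.2.2]; exact hp.2)
      simp only
      rw [hdiag _ h1]
      simp only [F]
      rw [if_pos hp.2, hrow j k hp.2.2]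
  refine Nat.card_congr ⟨fun m => ⟨F m.1, ?_, ?_⟩, fun T => ⟨G T.1, ?_, ?_⟩, ?_, ?_⟩
  · obtain ⟨m, hS, -⟩ := m
    have hFk : ∀ (j : Fin (lam 0)) (k : ℤ), b j ≤ k → k ≤ a j →
        ∃ i : ℕ, k = ((j : ℕ) : ℤ) - i ∧ InSkew lam mu (i, (j : ℕ)) := fun j k h1 h2 =>
      ⟨(((j : ℕ) : ℤ) - k).toNat, (hrow j k h2).symm,
        (hbox _ j).2 (by rw [hrow j k h2]; exact ⟨h1, h2⟩)⟩
    refine ⟨fun j => ?_, fun j k h => if_neg h, ?_, ?_, ?_⟩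
    · have := hcc j
      rw [ha, hb]
      omega
    · intro j k h1 h2
      obtain ⟨i, rfl, h3⟩ := hFk j k h1 h2
      show 0 < F m j _
      rw [hFbox m i j h3]
      exact hS.pos _ h3
    · intro j k h1 h2
      obtain ⟨i, hi, h3⟩ := hFk j (k + 1) (by omega) h2
      obtain ⟨i', rfl, h4⟩ := hFk j k h1 (by omega)
      obtain rfl : i' = i + 1 := by omega
      show F m j _ < F m j _
      rw [hi, hFbox m i j h3, hFbox m (i + 1) j h4]
      exact hS.col_lt i j h3 h4
    · intro j j' hj k h1 h2 h3 h4
      obtain ⟨i, rfl, h5⟩ := hFk j k h1 h2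
      obtain ⟨i', hi', h6⟩ := hFk j' _ h3 h4
      obtain rfl : i' = i := by omega
      show F m j _ ≤ F m j' _
      rw [hi', hFbox m i' j h5, hFbox m i' j' h6, hj]
      rw [hj] at h6
      exact hS.row_le i' j h5 h6
  · exact (hwt _).trans m.2.2
  · obtain ⟨T, hT, -⟩ := T
    have hG : ∀ i j (h : j < lam 0), G T (i, j) = T ⟨j, h⟩ ((j : ℤ) - i) := fun i j h => by
      simp only [G, h, dif_pos]
    have hj0 : ∀ {i j}, InSkew lam mu (i, j) → j < lam 0 := fun {i j} h =>
      lt_of_lt_of_le h.2 (hl0 i)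
    refine ⟨?_, ?_, ?_, ?_⟩
    · rintro ⟨i, j⟩ h
      by_cases hj : j < lam 0
      · show G T _ = 0
        rw [hG i j hj]
        exact hT.zero_off _ _ fun h' => h ((hbox i ⟨j, hj⟩).2 h')
      · exact dif_neg hj
    · rintro ⟨i, j⟩ h
      show 0 < G T _
      rw [hG i j (hj0 h)]
      have := (hbox i ⟨j, hj0 h⟩).1 h
      exact hT.pos _ _ this.1 this.2
    · intro i j h h'
      show G T _ ≤ G T _
      rw [hG i j (hj0 h), hG i (j + 1) (hj0 h')]
      have h1 := (hbox i ⟨j, hj0 h⟩).1 h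
      have h2 := (hbox i ⟨j + 1, hj0 h'⟩).1 h'
      simp only at h1 h2
      have e : ((j + 1 : ℕ) : ℤ) - i = (j : ℤ) - i + 1 := by push_cast; ring
      rw [e] at h2 ⊢
      exact hT.row _ _ rfl _ h1.1 h1.2 h2.1 h2.2
    · intro i j h h'
      show G T _ < G T _
      rw [hG i j (hj0 h), hG (i + 1) j (hj0 h')]
      have h1 := (hbox i ⟨j, hj0 h⟩).1 h
      have h2 := (hbox (i + 1) ⟨j, hj0 h'⟩).1 h'
      simp only at h1 h2
      have e : (j : ℤ) - i = (j : ℤ) - ((i + 1 : ℕ) : ℤ) + 1 := by push_cast; ring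
      rw [e] at h1 ⊢
      exact hT.col _ _ h2.1 h1.2
  · rw [← hwt, hFG _ T.2.1]
    exact T.2.2
  · intro m
    exact Subtype.ext (hGF _ m.2.1)
  · intro T
    exact Subtype.ext (hFG _ T.2.1)

end SMZ

/-- Jacobi–Trudi formula of `E`-type for Schur type quasi-symmetric functions, as an
identity of formal power series. -/
theorem schurQS_jacobiTrudi_M_entries
    (r : ℕ) (lam mu : ℕ → ℕ) (hlm : SMZ.IsSkewPairWith r lam mu)
    (γ : ℕ × ℕ → ℕ) (c : ℤ → ℕ)
    (hpos : ∀ p, SMZ.InSkew lam mu p → 0 < γ p)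
    (hdiag : ∀ p : ℕ × ℕ, SMZ.InSkew lam mu p → γ p = c ((p.2 : ℤ) - (p.1 : ℤ))) :
    SMZ.schurQS r lam mu γ =
      Matrix.det (Matrix.of fun i j : Fin (lam 0) =>
        SMZ.MqsymSeqDesc c (((j : ℕ) : ℤ) - (SMZ.conjPart r mu (j : ℕ) : ℤ))
          ((SMZ.conjPart r lam (i : ℕ) : ℤ) - (SMZ.conjPart r mu (j : ℕ) : ℤ)
            - ((i : ℕ) : ℤ) + ((j : ℕ) : ℤ))) := by
  let a : Fin (lam 0) → ℤ := fun j => ((j : ℕ) : ℤ) - (SMZ.conjPart r mu (j : ℕ) : ℤ)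
  let b : Fin (lam 0) → ℤ := fun j => ((j : ℕ) : ℤ) - (SMZ.conjPart r lam (j : ℕ) : ℤ) + 1
  have ha : StrictMono a := fun x y hxy => by
    have h1 := SMZ.conjPart_antitone r mu (Fin.lt_def.1 hxy).le
    have h2 := Fin.lt_def.1 hxy
    simp only [a]
    omega
  have hb : StrictMono b := fun x y hxy => by
    have h1 := SMZ.conjPart_antitone r lam (Fin.lt_def.1 hxy).le
    have h2 := Fin.lt_def.1 hxy
    simp only [b]
    omega
  have hc : ∀ j k, b j ≤ k → k ≤ a j → 0 < c k := by
    intro j k h1 h2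
    simp only [a, b] at h1 h2
    obtain ⟨i, rfl⟩ : ∃ i : ℕ, k = ((j : ℕ) : ℤ) - i := ⟨(((j : ℕ) : ℤ) - k).toNat, by omega⟩
    obtain ⟨hl, hm, hle, hr⟩ := hlm
    have h3 := SMZ.lt_conjPart hl hr i j
    have h4 := SMZ.lt_conjPart hm (fun i hi => Nat.le_zero.1 (hr i hi ▸ hle i)) i j
    have hs : SMZ.InSkew lam mu (i, (j : ℕ)) := by
      unfold SMZ.InSkew
      simp only
      omega
    have h5 := hpos _ hs
    rwa [hdiag _ hs] at h5
  have hmat : (Matrix.of fun i j : Fin (lam 0) =>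
        SMZ.MqsymSeqDesc c (((j : ℕ) : ℤ) - (SMZ.conjPart r mu (j : ℕ) : ℤ))
          ((SMZ.conjPart r lam (i : ℕ) : ℤ) - (SMZ.conjPart r mu (j : ℕ) : ℤ)
            - ((i : ℕ) : ℤ) + ((j : ℕ) : ℤ)))
      = Matrix.of fun i j => SMZ.MqsymSeqDesc c (a j) (a j - b i + 1) := by
    ext1 i j
    simp only [Matrix.of_apply, a, b]
    congr 1
    ring
  rw [hmat]
  ext d
  -- only the variables occurring in the monomial `d` matter
  have hd : ∀ m ∈ d.support, m ≤ d.support.sup id := fun m hm => Finset.le_sup (f := id) hm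
  rw [SMZ.coeff_det_Mqsym c a b hc _ d hd, SMZ.coeff_det_colSum c ha hb hc _ d hd,
    ← SMZ.card_skew hlm γ c hdiag (fun _ => rfl) (fun _ => rfl) d]
  rfl
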